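/- Let ρ_RQE be a state on H_R⊗H_Q⊗H_E (all finite-dimensional). Suppose that for all finite-dimensional Hilbert spaces H_{Q'}, H_{E'} and every isometry V : H_Q⊗H_E → H_{Q'}⊗H_{E'}, setting σ_{RQ'E'} = (1_R⊗V) ρ_RQE (1_R⊗V)†, the data-processing inequality I(R;Q)_ρ ≥ I(R;Q')_σ holds. Then I(R;E|Q)_ρ = 0. -/

import Mathlib

open Matrix Kronecker ComplexOrder

noncomputable section

/-- Von Neumann entropy `S(ρ) = -Tr[ρ log ρ]`, computed from the eigenvalues
(junk value `0` if `ρ` is not Hermitian). -/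
def vnEntropy {n : Type*} [Fintype n] [DecidableEq n] (ρ : Matrix n n ℂ) : ℝ :=
  if h : ρ.IsHermitian then ∑ i, Real.negMulLog (h.eigenvalues i) else 0

/-- Partial trace over the first tensor factor. -/
def ptraceLeft {A B : Type*} [Fintype A] (M : Matrix (A × B) (A × B) ℂ) : Matrix B B ℂ :=
  Matrix.of fun x y => ∑ a, M (a, x) (a, y)

/-- Partial trace over the second tensor factor. -/
def ptraceRight {A B : Type*} [Fintype B] (M : Matrix (A × B) (A × B) ℂ) : Matrix A A ℂ :=
  Matrix.of fun x y => ∑ b, M (x, b) (y, b)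

/-- Partial trace over the last factor of a tripartite operator on `R ⊗ Q ⊗ E`. -/
def ptrace3E {R Q E : Type*} [Fintype E] (M : Matrix (R × Q × E) (R × Q × E) ℂ) :
    Matrix (R × Q) (R × Q) ℂ :=
  Matrix.of fun x y => ∑ e, M (x.1, x.2, e) (y.1, y.2, e)

/-- A state is a positive semidefinite operator with unit trace. -/
def IsState {n : Type*} [Fintype n] (ρ : Matrix n n ℂ) : Prop :=
  ρ.PosSemidef ∧ ρ.trace = 1

/-- Quantum mutual information `I(A;B) = S(ρ_A) + S(ρ_B) - S(ρ_AB)`. -/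
def mutualInfo {A B : Type*} [Fintype A] [DecidableEq A] [Fintype B] [DecidableEq B]
    (ρ : Matrix (A × B) (A × B) ℂ) : ℝ :=
  vnEntropy (ptraceRight ρ) + vnEntropy (ptraceLeft ρ) - vnEntropy ρ

/-- Conditional quantum mutual information
`I(R;E|Q) = S(ρ_RQ) + S(ρ_QE) - S(ρ_RQE) - S(ρ_Q)`. -/
def condMutualInfo {R Q E : Type*} [Fintype R] [DecidableEq R] [Fintype Q] [DecidableEq Q]
    [Fintype E] [DecidableEq E] (ρ : Matrix (R × Q × E) (R × Q × E) ℂ) : ℝ :=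
  vnEntropy (ptrace3E ρ) + vnEntropy (ptraceLeft ρ) - vnEntropy ρ
    - vnEntropy (ptraceLeft (ptrace3E ρ))

/-- The map `id_n ⊗ Φ` obtained by applying `Φ` blockwise. -/
def idTensor {A B : Type*} (n : Type*) (Φ : Matrix A A ℂ →ₗ[ℂ] Matrix B B ℂ)
    (M : Matrix (n × A) (n × A) ℂ) : Matrix (n × B) (n × B) ℂ :=
  Matrix.of fun x y => Φ (Matrix.of fun a b => M (x.1, a) (y.1, b)) x.2 y.2

/-- Complete positivity: for every `k`, `id_{Fin k} ⊗ Φ` preserves positive semidefiniteness. -/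
def IsCPMap {A B : Type*} [Fintype A] [Fintype B]
    (Φ : Matrix A A ℂ →ₗ[ℂ] Matrix B B ℂ) : Prop :=
  ∀ (k : ℕ) (M : Matrix (Fin k × A) (Fin k × A) ℂ), M.PosSemidef →
    (idTensor (Fin k) Φ M).PosSemidef

/-- A CPTP map (quantum channel). -/
def IsCPTP {A B : Type*} [Fintype A] [Fintype B]
    (Φ : Matrix A A ℂ →ₗ[ℂ] Matrix B B ℂ) : Prop :=
  IsCPMap Φ ∧ ∀ M : Matrix A A ℂ, (Φ M).trace = M.trace

/-- The family of states on `Q ⊗ E` steered from `R` by measurements on a tripartite state. -/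
def steered {R Q E : Type*} [Fintype R] [Fintype Q] [DecidableEq Q] [Fintype E] [DecidableEq E]
    (ρ : Matrix (R × Q × E) (R × Q × E) ℂ) : Set (Matrix (Q × E) (Q × E) ℂ) :=
  { ω | ∃ P : Matrix R R ℂ, P.PosSemidef ∧
      (ptraceLeft ((P ⊗ₖ (1 : Matrix (Q × E) (Q × E) ℂ)) * ρ)).trace ≠ 0 ∧
      ω = ((ptraceLeft ((P ⊗ₖ (1 : Matrix (Q × E) (Q × E) ℂ)) * ρ)).trace)⁻¹ •
            ptraceLeft ((P ⊗ₖ (1 : Matrix (Q × E) (Q × E) ℂ)) * ρ) }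

/-- A post-selected family of bipartite system-environment states: the normalized
output state space of some completely positive map `𝒫 : Q₀E₀ → QE`. -/
def IsPostSelected {Q E : Type*} [Fintype Q] [Fintype E]
    (S : Set (Matrix (Q × E) (Q × E) ℂ)) : Prop :=
  ∃ (n0 m0 : ℕ)
    (P : Matrix (Fin n0 × Fin m0) (Fin n0 × Fin m0) ℂ →ₗ[ℂ] Matrix (Q × E) (Q × E) ℂ),
    IsCPMap P ∧
    S = { ω | ∃ ρ0, IsState ρ0 ∧ (P ρ0).trace ≠ 0 ∧ ω = ((P ρ0).trace)⁻¹ • P ρ0 }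

/-!
Applied to the isometry that moves the environment into the system and leaves a one-dimensional
environment behind, the hypothesis reads `I(R;QE) ≤ I(R;Q)`. By the chain rule
`I(R;QE) = I(R;Q) + I(R;E|Q)` this says `I(R;E|Q) ≤ 0`, while strong subadditivity says
`0 ≤ I(R;E|Q)`.

Strong subadditivity is the monotonicity `D(ρ_RQ ‖ 1 ⊗ ρ_Q) ≤ D(ρ_RQE ‖ 1 ⊗ ρ_QE)` of the relative
entropy. For the monotonicity, let `p`, `q` be the eigenvalues of `ρ`, `σ` with eigenvectors `u`,
`v`, put `d = (1 - t) q + t p`, and write `D(ρ‖σ)` as the increment over `0 ≤ t ≤ 1` of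
`∑ |⟨v, u⟩|² p log d`. The derivative in `t` is an increasing function of `∑ |⟨v, u⟩|² p² / d`, and
this sum is the maximum over all operators `Y` of a quadratic functional that involves `ρ` and `σ`
only through traces `Tr(· ρ)` and `Tr(· σ)`. Passing to a marginal amounts to restricting `Y` to a
star-subalgebra, which can only lower the maximum.
-/

section Scalar

theorem hasDerivAt_log_segment {p q t : ℝ} (hp : 0 < p) (hq : 0 < q) (ht : t ∈ Set.Icc (0 : ℝ) 1) :
    HasDerivAt (fun t => Real.log ((1 - t) * q + t * p)) ((p - q) / ((1 - t) * q + t * p)) t := by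
  have hpos : 0 < (1 - t) * q + t * p :=
    (convex_Ioi (0 : ℝ)) hq hp (sub_nonneg.2 ht.2) ht.1 (by ring)
  have h : HasDerivAt (fun t : ℝ => (1 - t) * q + t * p) (p - q) t :=
    ((((hasDerivAt_id t).const_sub 1).mul_const q).add ((hasDerivAt_id t).mul_const p)).congr_deriv
      (by ring)
  exact h.log hpos.ne'

theorem mul_sub_div_segment {p q t : ℝ} (hp : 0 < p) (hq : 0 < q) (ht : t ∈ Set.Ioo (0 : ℝ) 1) :
    p * ((p - q) / ((1 - t) * q + t * p)) =
      (p ^ 2 / ((1 - t) * q + t * p) - p) / (1 - t) := by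
  have h1 : 0 < 1 - t := sub_pos.2 ht.2
  have h0 := ht.1
  have hne : (1 - t) * q + t * p ≠ 0 := by positivity
  field_simp [hne]
  ring

variable {ι κ : Type*} [Fintype ι] [Fintype κ]

theorem hasDerivAt_sum_mul_log_segment {w p q : ι → ℝ} (hp : ∀ i, 0 ≤ p i) (hq : ∀ i, 0 ≤ q i)
    (hac : ∀ i, q i = 0 → w i * p i = 0) {t : ℝ} (ht : t ∈ Set.Icc (0 : ℝ) 1) :
    HasDerivAt (fun t => ∑ i, w i * p i * Real.log ((1 - t) * q i + t * p i))
      (∑ i, w i * p i * ((p i - q i) / ((1 - t) * q i + t * p i))) t := by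
  refine HasDerivAt.fun_sum fun i _ => ?_
  by_cases hwp : w i * p i = 0
  · simpa only [hwp, zero_mul] using hasDerivAt_const t (0 : ℝ)
  · exact (hasDerivAt_log_segment ((hp i).lt_of_ne' (right_ne_zero_of_mul hwp))
      ((hq i).lt_of_ne' (mt (hac i) hwp)) ht).const_mul _

theorem sum_mul_sub_div_segment {w p q : ι → ℝ} (hp : ∀ i, 0 ≤ p i) (hq : ∀ i, 0 ≤ q i)
    (hac : ∀ i, q i = 0 → w i * p i = 0) {t : ℝ} (ht : t ∈ Set.Ioo (0 : ℝ) 1) :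
    ∑ i, w i * p i * ((p i - q i) / ((1 - t) * q i + t * p i)) =
      (∑ i, w i * (p i ^ 2 / ((1 - t) * q i + t * p i)) - ∑ i, w i * p i) / (1 - t) := by
  rw [← Finset.sum_sub_distrib, Finset.sum_div]
  refine Finset.sum_congr rfl fun i _ => ?_
  by_cases hwp : w i * p i = 0
  · rcases mul_eq_zero.1 hwp with h | h <;> simp [h]
  · rw [mul_assoc, mul_sub_div_segment ((hp i).lt_of_ne' (right_ne_zero_of_mul hwp))
      ((hq i).lt_of_ne' (mt (hac i) hwp)) ht]
    ring

theorem sum_mul_log_sub_log_le_of_sum_sq_div_le {w p q : ι → ℝ} {w' p' q' : κ → ℝ}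
    (hp : ∀ i, 0 ≤ p i) (hq : ∀ i, 0 ≤ q i) (hac : ∀ i, q i = 0 → w i * p i = 0)
    (hp' : ∀ i, 0 ≤ p' i) (hq' : ∀ i, 0 ≤ q' i) (hac' : ∀ i, q' i = 0 → w' i * p' i = 0)
    (hsum : ∑ i, w i * p i = ∑ i, w' i * p' i)
    (hle : ∀ t ∈ Set.Ioo (0 : ℝ) 1, ∑ i, w i * (p i ^ 2 / ((1 - t) * q i + t * p i)) ≤
      ∑ i, w' i * (p' i ^ 2 / ((1 - t) * q' i + t * p' i))) :
    ∑ i, w i * p i * (Real.log (p i) - Real.log (q i)) ≤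
      ∑ i, w' i * p' i * (Real.log (p' i) - Real.log (q' i)) := by
  have hderiv := fun t (ht : t ∈ Set.Icc (0 : ℝ) 1) =>
    (hasDerivAt_sum_mul_log_segment hp' hq' hac' ht).fun_sub
      (hasDerivAt_sum_mul_log_segment hp hq hac ht)
  have hmono := monotoneOn_of_deriv_nonneg (convex_Icc (0 : ℝ) 1)
    (fun t ht => (hderiv t ht).continuousAt.continuousWithinAt)
    (fun t ht => (hderiv t (interior_subset ht)).differentiableAt.differentiableWithinAt)
    (fun t ht => by
      rw [(hderiv t (interior_subset ht)).deriv]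
      rw [interior_Icc] at ht
      rw [sum_mul_sub_div_segment hp hq hac ht, sum_mul_sub_div_segment hp' hq' hac' ht, hsum,
        ← sub_div, sub_sub_sub_cancel_right]
      exact div_nonneg (sub_nonneg.2 (hle t ht)) (sub_nonneg.2 ht.2.le))
  have h01 := hmono (Set.left_mem_Icc.2 zero_le_one) (Set.right_mem_Icc.2 zero_le_one) zero_le_one
  simp only [sub_zero, one_mul, zero_mul, add_zero, sub_self, zero_add] at h01
  simp only [mul_sub, Finset.sum_sub_distrib]
  linarith

theorem two_mul_re_conj_mul_sub_le {p d : ℝ} (hd : 0 ≤ d) (hpd : d = 0 → p = 0) (c y : ℂ) :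
    2 * (p * (star y * c).re) - d * Complex.normSq y ≤ Complex.normSq c * (p ^ 2 / d) := by
  rcases hd.eq_or_lt with rfl | hd
  · simp [hpd rfl]
  · have h := Complex.normSq_nonneg (p * c - d * y)
    rw [← mul_div_assoc, le_div_iff₀ hd]
    simp only [Complex.normSq_apply, Complex.mul_re, Complex.sub_re, Complex.sub_im,
      Complex.mul_im, Complex.ofReal_re, Complex.ofReal_im, Complex.star_def, Complex.conj_re,
      Complex.conj_im] at h ⊢
    nlinarith

theorem two_mul_re_conj_div_mul_sub {p d : ℝ} (hpd : d = 0 → p = 0) (c : ℂ) :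
    2 * (p * (star (((p / d : ℝ) : ℂ) * c) * c).re) - d * Complex.normSq (((p / d : ℝ) : ℂ) * c) =
      Complex.normSq c * (p ^ 2 / d) := by
  rcases eq_or_ne d 0 with rfl | hd
  · simp [hpd rfl]
  · simp only [Complex.normSq_apply, Complex.mul_re, Complex.mul_im, Complex.ofReal_re,
      Complex.ofReal_im, Complex.star_def, Complex.conj_re, Complex.conj_im]
    field_simp
    ring

theorem eq_zero_of_segment_eq_zero {p q t : ℝ} (hp : 0 ≤ p) (hq : 0 ≤ q)
    (ht : t ∈ Set.Ioo (0 : ℝ) 1) (h : (1 - t) * q + t * p = 0) : p = 0 := by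
  have h1 := mul_nonneg (sub_nonneg.2 ht.2.le) hq
  have h2 := mul_nonneg ht.1.le hp
  exact (mul_eq_zero.1 (by linarith : t * p = 0)).resolve_left ht.1.ne'

end Scalar

open scoped MatrixOrder in
theorem mul_eq_zero_of_trace_mul_eq_zero {n : Type*} [Fintype n] {ρ Y : Matrix n n ℂ}
    (hρ : ρ.PosSemidef) (h : (Y * Yᴴ * ρ).trace = 0) : ρ * Y = 0 := by
  classical
  obtain ⟨B, rfl⟩ := CStarAlgebra.nonneg_iff_eq_star_mul_self.1 hρ.nonneg
  have hB : B * Y = 0 := by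
    rw [← Matrix.trace_conjTranspose_mul_self_eq_zero_iff, conjTranspose_mul, Matrix.mul_assoc,
      Matrix.trace_mul_comm, ← h, Matrix.trace_mul_comm (Y * Yᴴ)]
    simp only [Matrix.mul_assoc, star_eq_conjTranspose]
  rw [Matrix.mul_assoc, hB, Matrix.mul_zero]

section Spectral

variable {n : Type*} [Fintype n] [DecidableEq n] {ρ σ : Matrix n n ℂ}

/-- The matrix of `Y` with respect to the eigenbases of `ρ` (source) and of `σ` (target). In these
coordinates left multiplication by `σ` and right multiplication by `ρ` are both diagonal. -/
def eigenCoords (hσ : σ.IsHermitian) (hρ : ρ.IsHermitian) (Y : Matrix n n ℂ) : Matrix n n ℂ :=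
  star (hσ.eigenvectorUnitary : Matrix n n ℂ) * Y * hρ.eigenvectorUnitary

theorem eigenCoords_surjective (hσ : σ.IsHermitian) (hρ : ρ.IsHermitian) :
    Function.Surjective (eigenCoords hσ hρ) := fun y => by
  refine ⟨hσ.eigenvectorUnitary * y * star (hρ.eigenvectorUnitary : Matrix n n ℂ), ?_⟩
  simp only [eigenCoords, Matrix.mul_assoc, Unitary.coe_star_mul_self, Matrix.mul_one]
  rw [← Matrix.mul_assoc, Unitary.coe_star_mul_self, Matrix.one_mul]

/-- The Nussbaum–Szkoła weight `|⟨vⱼ, uᵢ⟩|²` of the pair `x = (j, i)`, where `v` and `u` are the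
eigenbases of `σ` and `ρ`. Against these weights, traces of products of functions of `σ` and `ρ`
become classical expectations. -/
def eigenOverlap (hσ : σ.IsHermitian) (hρ : ρ.IsHermitian) (x : n × n) : ℝ :=
  Complex.normSq (eigenCoords hσ hρ 1 x.1 x.2)

theorem trace_conjTranspose_mul_cfc_mul_mul_cfc (hσ : σ.IsHermitian) (hρ : ρ.IsHermitian)
    (f g : ℝ → ℝ) (X Y : Matrix n n ℂ) :
    (Xᴴ * cfc f σ * Y * cfc g ρ).trace = ∑ x : n × n,
      ((f (hσ.eigenvalues x.1) * g (hρ.eigenvalues x.2) : ℝ) : ℂ) *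
        (star (eigenCoords hσ hρ X x.1 x.2) * eigenCoords hσ hρ Y x.1 x.2) := by
  have hcyc : (Xᴴ * cfc f σ * Y * cfc g ρ).trace =
      ((eigenCoords hσ hρ X)ᴴ * (diagonal (fun j => (f (hσ.eigenvalues j) : ℂ)) *
        eigenCoords hσ hρ Y * diagonal (fun i => (g (hρ.eigenvalues i) : ℂ)))).trace := by
    rw [hσ.cfc_eq, hρ.cfc_eq, Matrix.IsHermitian.cfc, Matrix.IsHermitian.cfc,
      Unitary.conjStarAlgAut_apply, Unitary.conjStarAlgAut_apply, ← Matrix.mul_assoc,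
      Matrix.trace_mul_comm]
    simp only [eigenCoords, star_eq_conjTranspose, conjTranspose_mul, conjTranspose_conjTranspose,
      Matrix.mul_assoc]
    rfl
  rw [hcyc, Fintype.sum_prod_type_right, Matrix.trace]
  refine Finset.sum_congr rfl fun i _ => ?_
  rw [Matrix.diag_apply, Matrix.mul_apply]
  refine Finset.sum_congr rfl fun j _ => ?_
  rw [Matrix.mul_diagonal, Matrix.diagonal_mul, conjTranspose_apply]
  push_cast
  ring

theorem trace_cfc_mul_cfc (hσ : σ.IsHermitian) (hρ : ρ.IsHermitian) (f g : ℝ → ℝ) :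
    (cfc f σ * cfc g ρ).trace = ((∑ x : n × n, eigenOverlap hσ hρ x *
      (f (hσ.eigenvalues x.1) * g (hρ.eigenvalues x.2)) : ℝ) : ℂ) := by
  have h := trace_conjTranspose_mul_cfc_mul_mul_cfc hσ hρ f g 1 1
  rw [conjTranspose_one, Matrix.one_mul, Matrix.mul_one] at h
  rw [h, Complex.ofReal_sum]
  refine Finset.sum_congr rfl fun x _ => ?_
  rw [Complex.star_def, ← Complex.normSq_eq_conj_mul_self, mul_comm, ← Complex.ofReal_mul,
    eigenOverlap]

theorem trace_eq_sum_eigenOverlap (hσ : σ.IsHermitian) (hρ : ρ.IsHermitian) :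
    ρ.trace = ((∑ x : n × n, eigenOverlap hσ hρ x * hρ.eigenvalues x.2 : ℝ) : ℂ) := by
  have h := trace_cfc_mul_cfc hσ hρ (fun _ => 1) id
  rw [cfc_const_one ℝ σ, cfc_id ℝ ρ, Matrix.one_mul] at h
  simpa using h

theorem continuousOn_spectrum (f : ℝ → ℝ) (A : Matrix n n ℂ) : ContinuousOn f (spectrum ℝ A) :=
  Matrix.finite_real_spectrum.continuousOn f

theorem mul_cfc (hρ : ρ.IsHermitian) (f : ℝ → ℝ) :
    ρ * cfc f ρ = cfc (fun x => x * f x) ρ := by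
  rw [cfc_mul (fun x => x) f ρ (continuousOn_spectrum _ ρ) (continuousOn_spectrum _ ρ),
    cfc_id' ℝ ρ]

theorem trace_cfc (hρ : ρ.IsHermitian) (f : ℝ → ℝ) :
    (cfc f ρ).trace = ((∑ i, f (hρ.eigenvalues i) : ℝ) : ℂ) := by
  rw [hρ.cfc_eq, Matrix.IsHermitian.cfc, Unitary.conjStarAlgAut_apply, Matrix.trace_mul_cycle,
    Unitary.coe_star_mul_self, Matrix.one_mul, Matrix.trace_diagonal, Complex.ofReal_sum]
  rfl

theorem vnEntropy_eq_neg_re_trace_mul_log (hρ : ρ.IsHermitian) :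
    vnEntropy ρ = -(ρ * cfc Real.log ρ).trace.re := by
  rw [mul_cfc hρ, trace_cfc hρ, Complex.ofReal_re, vnEntropy, dif_pos hρ,
    ← Finset.sum_neg_distrib]
  simp only [Real.negMulLog, neg_mul]

/-- The quantum relative entropy `D(ρ‖σ) = Tr[ρ (log ρ - log σ)]`. The convention `log 0 = 0` makes
it finite; it agrees with the usual, possibly infinite, quantity only under `SupportLE ρ σ`. -/
def relEntropy (ρ σ : Matrix n n ℂ) : ℝ :=
  (ρ * (cfc Real.log ρ - cfc Real.log σ)).trace.re

theorem relEntropy_eq_sum (hσ : σ.IsHermitian) (hρ : ρ.IsHermitian) :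
    relEntropy ρ σ = ∑ x : n × n, eigenOverlap hσ hρ x * hρ.eigenvalues x.2 *
      (Real.log (hρ.eigenvalues x.2) - Real.log (hσ.eigenvalues x.1)) := by
  have hself := trace_cfc_mul_cfc hσ hρ (fun _ => 1) (fun p => p * Real.log p)
  have hcross := trace_cfc_mul_cfc hσ hρ Real.log id
  rw [cfc_const_one ℝ σ, Matrix.one_mul, ← mul_cfc hρ] at hself
  rw [cfc_id ℝ ρ, Matrix.trace_mul_comm] at hcross
  rw [relEntropy, Matrix.mul_sub, Matrix.trace_sub, hself, hcross, ← Complex.ofReal_sub,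
    Complex.ofReal_re, ← Finset.sum_sub_distrib]
  refine Finset.sum_congr rfl fun x _ => ?_
  rw [id_eq]
  ring

/-- The orthogonal projection onto the kernel of a Hermitian matrix. -/
def kerProj (σ : Matrix n n ℂ) : Matrix n n ℂ :=
  cfc (fun x : ℝ => if x = 0 then 1 else 0) σ

theorem mul_kerProj (hσ : σ.IsHermitian) : σ * kerProj σ = 0 := by
  rw [kerProj, mul_cfc hσ, ← cfc_const_zero ℝ σ]
  congr 1
  ext x
  by_cases hx : x = 0 <;> simp [hx]

theorem kerProj_mul_conjTranspose (σ : Matrix n n ℂ) :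
    kerProj σ * (kerProj σ)ᴴ = kerProj σ := by
  rw [← star_eq_conjTranspose, kerProj, ← cfc_star, ← cfc_mul _ _ σ (continuousOn_spectrum _ σ)
    (continuousOn_spectrum _ σ)]
  congr 1
  ext x
  split_ifs <;> simp

theorem kerProj_mul_of_mul_eq_zero (hσ : σ.IsHermitian) {Y : Matrix n n ℂ} (hY : σ * Y = 0) :
    kerProj σ * Y = Y := by
  have h : kerProj σ + cfc (fun x : ℝ => x⁻¹) σ * σ = 1 := by
    conv_lhs => enter [2, 2]; rw [← cfc_id' ℝ σ]
    rw [kerProj, ← cfc_mul _ _ σ (continuousOn_spectrum _ σ) (continuousOn_spectrum _ σ),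
      ← cfc_add σ _ _ (continuousOn_spectrum _ σ) (continuousOn_spectrum _ σ), ← cfc_const_one ℝ σ]
    congr 1
    ext x
    by_cases hx : x = 0 <;> simp [hx]
  calc kerProj σ * Y = (kerProj σ + cfc (fun x : ℝ => x⁻¹) σ * σ) * Y := by
        rw [Matrix.add_mul, Matrix.mul_assoc, hY, Matrix.mul_zero, add_zero]
    _ = Y := by rw [h, Matrix.one_mul]

/-- The inclusion `supp ρ ⊆ supp σ`, stated as `ker σ ⊆ ker ρ` with matrices `Y` standing for
tuples of vectors, so that it can be tested on projections and products. -/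
def SupportLE {n : Type*} [Fintype n] (ρ σ : Matrix n n ℂ) : Prop :=
  ∀ Y : Matrix n n ℂ, σ * Y = 0 → ρ * Y = 0

theorem eigenOverlap_nonneg (hσ : σ.IsHermitian) (hρ : ρ.IsHermitian) (x : n × n) :
    0 ≤ eigenOverlap hσ hρ x :=
  Complex.normSq_nonneg _

theorem SupportLE.eigenOverlap_mul_eq_zero (h : SupportLE ρ σ) (hσ : σ.IsHermitian)
    (hρ : ρ.PosSemidef) {x : n × n} (hx : hσ.eigenvalues x.1 = 0) :
    eigenOverlap hσ hρ.isHermitian x * hρ.isHermitian.eigenvalues x.2 = 0 := by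
  have htr : (kerProj σ * ρ).trace = 0 := by
    rw [Matrix.trace_mul_comm, h _ (mul_kerProj hσ), Matrix.trace_zero]
  have hsum := trace_cfc_mul_cfc hσ hρ.isHermitian (fun x => if x = 0 then 1 else 0) id
  rw [cfc_id ℝ ρ hρ.isHermitian.isSelfAdjoint, ← kerProj, htr, eq_comm,
    Complex.ofReal_eq_zero] at hsum
  have hterm := (Finset.sum_eq_zero_iff_of_nonneg fun y _ => mul_nonneg (eigenOverlap_nonneg _ _ y)
    (mul_nonneg (by positivity) (hρ.eigenvalues_nonneg _))).1 hsum x (Finset.mem_univ x)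
  simpa only [hx, if_true, one_mul, id_eq] using hterm

/-- A quadratic functional of `Y`, concave for positive semidefinite `ρ` and `σ`. Its maximum is
`∑ |⟨v, u⟩|² p² / ((1 - t) q + t p)`, a quadratic form in the resolvent of the relative modular
operator. -/
def modularForm {n : Type*} [Fintype n] (t : ℝ) (ρ σ Y : Matrix n n ℂ) : ℝ :=
  2 * (Yᴴ * ρ).trace.re - (1 - t) * (Y * Yᴴ * σ).trace.re - t * (Yᴴ * Y * ρ).trace.re

theorem modularForm_eq_sum (hσ : σ.IsHermitian) (hρ : ρ.IsHermitian) (t : ℝ)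
    (Y : Matrix n n ℂ) :
    modularForm t ρ σ Y = ∑ x : n × n,
      (2 * (hρ.eigenvalues x.2 *
          (star (eigenCoords hσ hρ Y x.1 x.2) * eigenCoords hσ hρ 1 x.1 x.2).re) -
        ((1 - t) * hσ.eigenvalues x.1 + t * hρ.eigenvalues x.2) *
          Complex.normSq (eigenCoords hσ hρ Y x.1 x.2)) := by
  have hlin := trace_conjTranspose_mul_cfc_mul_mul_cfc hσ hρ (fun _ => 1) id Y 1
  have hquadσ := trace_conjTranspose_mul_cfc_mul_mul_cfc hσ hρ id (fun _ => 1) Y Y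
  have hquadρ := trace_conjTranspose_mul_cfc_mul_mul_cfc hσ hρ (fun _ => 1) id Y Y
  rw [cfc_const_one ℝ σ, cfc_id ℝ ρ, Matrix.mul_one] at hlin hquadρ
  rw [cfc_id ℝ σ, cfc_const_one ℝ ρ, Matrix.mul_one, Matrix.trace_mul_cycle] at hquadσ
  rw [Matrix.mul_one] at hlin
  rw [modularForm, hlin, hquadσ, hquadρ]
  simp only [Complex.star_def, ← Complex.normSq_eq_conj_mul_self, id_eq, one_mul, mul_one,
    Complex.re_sum, Complex.re_ofReal_mul, Complex.ofReal_re, Finset.mul_sum,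
    ← Finset.sum_sub_distrib]
  refine Finset.sum_congr rfl fun x _ => ?_
  ring

theorem isGreatest_range_modularForm (hσ : σ.PosSemidef) (hρ : ρ.PosSemidef) {t : ℝ}
    (ht : t ∈ Set.Ioo (0 : ℝ) 1) :
    IsGreatest (Set.range (modularForm t ρ σ)) (∑ x : n × n,
      eigenOverlap hσ.isHermitian hρ.isHermitian x * (hρ.isHermitian.eigenvalues x.2 ^ 2 /
        ((1 - t) * hσ.isHermitian.eigenvalues x.1 + t * hρ.isHermitian.eigenvalues x.2))) := by
  set p := hρ.isHermitian.eigenvalues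
  set q := hσ.isHermitian.eigenvalues
  have hm : ∀ x : n × n, (1 - t) * q x.1 + t * p x.2 = 0 → p x.2 = 0 := fun x =>
    eq_zero_of_segment_eq_zero (hρ.eigenvalues_nonneg _) (hσ.eigenvalues_nonneg _) ht
  constructor
  · obtain ⟨Y, hY⟩ := eigenCoords_surjective hσ.isHermitian hρ.isHermitian
      (Matrix.of fun j i => ((p i / ((1 - t) * q j + t * p i) : ℝ) : ℂ) *
        eigenCoords hσ.isHermitian hρ.isHermitian 1 j i)
    refine ⟨Y, ?_⟩
    rw [modularForm_eq_sum hσ.isHermitian hρ.isHermitian, hY]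
    exact Finset.sum_congr rfl fun x _ => two_mul_re_conj_div_mul_sub (hm x) _
  · rintro _ ⟨Y, rfl⟩
    rw [modularForm_eq_sum hσ.isHermitian hρ.isHermitian]
    exact Finset.sum_le_sum fun x _ => two_mul_re_conj_mul_sub_le
      (add_nonneg (mul_nonneg (sub_nonneg.2 ht.2.le) (hσ.eigenvalues_nonneg _))
        (mul_nonneg ht.1.le (hρ.eigenvalues_nonneg _))) (hm x) _ _

end Spectral

section Marginal

variable {m n : Type*} [Fintype m] [DecidableEq m] [Fintype n] [DecidableEq n]
  {φ : Matrix m m ℂ →⋆ₐ[ℂ] Matrix n n ℂ} {ρ σ : Matrix n n ℂ} {ρ' σ' : Matrix m m ℂ}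

/-- `ρ'` is the density of the restriction of the functional `Tr(· ρ)` along the embedding `φ`. Both
kinds of partial trace are of this form. -/
def IsMarginal (φ : Matrix m m ℂ →⋆ₐ[ℂ] Matrix n n ℂ) (ρ : Matrix n n ℂ) (ρ' : Matrix m m ℂ) :
    Prop :=
  ∀ Y, (φ Y * ρ).trace = (Y * ρ').trace

theorem starAlgHom_conjTranspose (φ : Matrix m m ℂ →⋆ₐ[ℂ] Matrix n n ℂ) (Y : Matrix m m ℂ) :
    φ Yᴴ = (φ Y)ᴴ :=
  map_star φ Y

theorem starAlgHom_cfc (φ : Matrix m m ℂ →⋆ₐ[ℂ] Matrix n n ℂ) {A : Matrix m m ℂ}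
    (hA : A.IsHermitian) (f : ℝ → ℝ) : φ (cfc f A) = cfc f (φ A) :=
  φ.map_cfc f A (continuousOn_spectrum f A)
    (LinearMap.continuous_of_finiteDimensional φ.toAlgHom.toLinearMap) hA.isSelfAdjoint
    (hA.isSelfAdjoint.map φ)

open scoped MatrixOrder in
theorem starAlgHom_posSemidef (φ : Matrix m m ℂ →⋆ₐ[ℂ] Matrix n n ℂ) {A : Matrix m m ℂ}
    (hA : A.PosSemidef) : (φ A).PosSemidef := by
  obtain ⟨B, rfl⟩ := CStarAlgebra.nonneg_iff_eq_star_mul_self.1 hA.nonneg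
  rw [map_mul, map_star]
  exact posSemidef_conjTranspose_mul_self _

namespace IsMarginal

theorem trace_eq (h : IsMarginal φ ρ ρ') : ρ.trace = ρ'.trace := by
  simpa using h 1

theorem isHermitian (h : IsMarginal φ ρ ρ') (hρ : ρ.IsHermitian) : ρ'.IsHermitian := by
  refine Matrix.ext_iff_trace_mul_left.2 fun Y => ?_
  calc (Y * ρ'ᴴ).trace = star (Yᴴ * ρ').trace := by
        rw [← Matrix.trace_conjTranspose, conjTranspose_mul, conjTranspose_conjTranspose,
          Matrix.trace_mul_comm]
    _ = star (φ Yᴴ * ρ).trace := by rw [h]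
    _ = (φ Y * ρ).trace := by
        rw [← Matrix.trace_conjTranspose, starAlgHom_conjTranspose, conjTranspose_mul,
          conjTranspose_conjTranspose, hρ.eq, Matrix.trace_mul_comm]
    _ = (Y * ρ').trace := h Y

open scoped MatrixOrder in
theorem posSemidef (h : IsMarginal φ ρ ρ') (hρ : ρ.PosSemidef) : ρ'.PosSemidef := by
  refine Matrix.PosSemidef.of_dotProduct_mulVec_nonneg (h.isHermitian hρ.isHermitian) fun v => ?_
  obtain ⟨B, hB⟩ := CStarAlgebra.nonneg_iff_eq_mul_star_self.1
    (posSemidef_vecMulVec_self_star v).nonneg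
  calc 0 ≤ ((φ B)ᴴ * ρ * φ B).trace := (hρ.conjTranspose_mul_mul_same _).trace_nonneg
    _ = (φ (vecMulVec v (star v)) * ρ).trace := by
        rw [hB, map_mul, map_star, star_eq_conjTranspose, Matrix.trace_mul_cycle]
    _ = star v ⬝ᵥ ρ' *ᵥ v := by
        rw [h, vecMulVec_mul, trace_vecMulVec, dotProduct_comm, dotProduct_mulVec]

theorem supportLE (hρ' : IsMarginal φ ρ ρ') (hσ' : IsMarginal φ σ σ') (hρ : ρ.PosSemidef)
    (hσ : σ.PosSemidef) (hρσ : SupportLE ρ σ) : SupportLE ρ' σ' := by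
  intro Y hY
  have hσφ : σ * φ Y = 0 := mul_eq_zero_of_trace_mul_eq_zero hσ <| by
    rw [← starAlgHom_conjTranspose, ← map_mul, hσ', Matrix.trace_mul_comm, ← Matrix.mul_assoc, hY,
      Matrix.zero_mul, Matrix.trace_zero]
  refine mul_eq_zero_of_trace_mul_eq_zero (hρ'.posSemidef hρ) ?_
  rw [← hρ', map_mul, starAlgHom_conjTranspose, Matrix.trace_mul_comm, ← Matrix.mul_assoc,
    hρσ _ hσφ, Matrix.zero_mul, Matrix.trace_zero]

theorem modularForm_map (hρ' : IsMarginal φ ρ ρ') (hσ' : IsMarginal φ σ σ') (t : ℝ)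
    (Y : Matrix m m ℂ) : modularForm t ρ σ (φ Y) = modularForm t ρ' σ' Y := by
  simp only [modularForm, ← starAlgHom_conjTranspose, ← map_mul, hρ' _, hσ' _]

theorem relEntropy_le (hρ' : IsMarginal φ ρ ρ') (hσ' : IsMarginal φ σ σ') (hρ : ρ.PosSemidef)
    (hσ : σ.PosSemidef) (hρσ : SupportLE ρ σ) :
    relEntropy ρ' σ' ≤ relEntropy ρ σ := by
  have hρ'pos := hρ'.posSemidef hρ
  have hσ'pos := hσ'.posSemidef hσ
  have hsum := hρ'.trace_eq
  rw [trace_eq_sum_eigenOverlap hσ.isHermitian hρ.isHermitian,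
    trace_eq_sum_eigenOverlap hσ'pos.isHermitian hρ'pos.isHermitian, Complex.ofReal_inj] at hsum
  rw [relEntropy_eq_sum hσ.isHermitian hρ.isHermitian,
    relEntropy_eq_sum hσ'pos.isHermitian hρ'pos.isHermitian]
  refine sum_mul_log_sub_log_le_of_sum_sq_div_le
    (fun _ => hρ'pos.eigenvalues_nonneg _) (fun _ => hσ'pos.eigenvalues_nonneg _)
    (fun _ => (hρ'.supportLE hσ' hρ hσ hρσ).eigenOverlap_mul_eq_zero hσ'pos.isHermitian hρ'pos)
    (fun _ => hρ.eigenvalues_nonneg _) (fun _ => hσ.eigenvalues_nonneg _)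
    (fun _ => hρσ.eigenOverlap_mul_eq_zero hσ.isHermitian hρ) hsum.symm fun t ht => ?_
  refine (isGreatest_range_modularForm hσ'pos hρ'pos ht).mono
    (isGreatest_range_modularForm hσ hρ ht) ?_
  rintro _ ⟨Y, rfl⟩
  exact ⟨φ Y, modularForm_map hρ' hσ' t Y⟩

theorem supportLE_map (h : IsMarginal φ ρ ρ') (hρ : ρ.PosSemidef) : SupportLE ρ (φ ρ') := by
  have hρ' := (h.posSemidef hρ).isHermitian
  have hφ : (φ ρ').IsHermitian := hρ'.isSelfAdjoint.map φ
  have hker : φ (kerProj ρ') = kerProj (φ ρ') := starAlgHom_cfc φ hρ' _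
  have hzero : ρ * kerProj (φ ρ') = 0 := mul_eq_zero_of_trace_mul_eq_zero hρ <| by
    rw [kerProj_mul_conjTranspose, ← hker, h, Matrix.trace_mul_comm, mul_kerProj hρ',
      Matrix.trace_zero]
  intro Y hY
  rw [← kerProj_mul_of_mul_eq_zero hφ hY, ← Matrix.mul_assoc, hzero, Matrix.zero_mul]

theorem relEntropy_map (h : IsMarginal φ ρ ρ') (hρ : ρ.IsHermitian) :
    relEntropy ρ (φ ρ') = vnEntropy ρ' - vnEntropy ρ := by
  have hρ' := h.isHermitian hρ
  have hcross : (ρ * cfc Real.log (φ ρ')).trace = (ρ' * cfc Real.log ρ').trace := by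
    rw [← starAlgHom_cfc φ hρ', Matrix.trace_mul_comm, h, Matrix.trace_mul_comm]
  rw [relEntropy, Matrix.mul_sub, Matrix.trace_sub, hcross, Complex.sub_re,
    vnEntropy_eq_neg_re_trace_mul_log hρ, vnEntropy_eq_neg_re_trace_mul_log hρ']
  ring

end IsMarginal

end Marginal

section TensorFactors

variable {A B R Q E : Type*} [Fintype A] [DecidableEq A] [Fintype B] [DecidableEq B]
  [Fintype R] [DecidableEq R] [Fintype Q] [DecidableEq Q] [Fintype E] [DecidableEq E]

/-- The embedding `X ↦ 1 ⊗ X` of the operators on the second tensor factor. -/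
def oneKronecker (A : Type*) {B : Type*} [Fintype A] [DecidableEq A] [Fintype B] [DecidableEq B] :
    Matrix B B ℂ →⋆ₐ[ℂ] Matrix (A × B) (A × B) ℂ where
  toFun X := 1 ⊗ₖ X
  map_one' := one_kronecker_one
  map_mul' X Y := by rw [← mul_kronecker_mul, Matrix.mul_one]
  map_zero' := kronecker_zero _
  map_add' X Y := kronecker_add _ _ _
  commutes' c := by
    rw [Algebra.algebraMap_eq_smul_one, Algebra.algebraMap_eq_smul_one, kronecker_smul,
      one_kronecker_one]
  map_star' X := by
    rw [star_eq_conjTranspose, star_eq_conjTranspose, conjTranspose_kronecker, conjTranspose_one]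

/-- The embedding `Y ↦ Y ⊗ 1` of the operators on the first two factors of `R ⊗ Q ⊗ E`, reindexed
along `(R × Q) × E ≃ R × Q × E`. -/
def kroneckerOne (E : Type*) [Fintype E] [DecidableEq E] :
    Matrix (R × Q) (R × Q) ℂ →⋆ₐ[ℂ] Matrix (R × Q × E) (R × Q × E) ℂ where
  toFun Y := (Y ⊗ₖ (1 : Matrix E E ℂ)).submatrix (Equiv.prodAssoc R Q E).symm
    (Equiv.prodAssoc R Q E).symm
  map_one' := by rw [one_kronecker_one, submatrix_one_equiv]
  map_mul' X Y := by rw [submatrix_mul_equiv, ← mul_kronecker_mul, Matrix.mul_one]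
  map_zero' := by rw [zero_kronecker, submatrix_zero]; rfl
  map_add' X Y := by rw [add_kronecker, submatrix_add]; rfl
  commutes' c := by
    rw [Algebra.algebraMap_eq_smul_one, Algebra.algebraMap_eq_smul_one, smul_kronecker,
      one_kronecker_one, submatrix_smul, Pi.smul_apply, Pi.smul_apply, submatrix_one_equiv]
  map_star' X := by
    rw [star_eq_conjTranspose, star_eq_conjTranspose, conjTranspose_submatrix,
      conjTranspose_kronecker, conjTranspose_one]

theorem oneKronecker_apply (X : Matrix B B ℂ) : oneKronecker A X = 1 ⊗ₖ X := rfl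

theorem kroneckerOne_apply (Y : Matrix (R × Q) (R × Q) ℂ) : kroneckerOne E Y =
    (Y ⊗ₖ (1 : Matrix E E ℂ)).submatrix (Equiv.prodAssoc R Q E).symm
      (Equiv.prodAssoc R Q E).symm := rfl

theorem isMarginal_ptraceLeft (M : Matrix (A × B) (A × B) ℂ) :
    IsMarginal (oneKronecker A) M (ptraceLeft M) := fun Y => by
  simp only [oneKronecker_apply, ptraceLeft, Matrix.trace, diag_apply, Matrix.mul_apply, of_apply,
    kroneckerMap_apply, one_apply, ite_mul, one_mul, zero_mul, Fintype.sum_prod_type,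
    Finset.sum_ite_irrel, Finset.sum_const_zero, Finset.sum_ite_eq, Finset.mem_univ, if_true,
    Finset.mul_sum]
  rw [Finset.sum_comm]
  exact Finset.sum_congr rfl fun _ _ => Finset.sum_comm

theorem isMarginal_ptrace3E (M : Matrix (R × Q × E) (R × Q × E) ℂ) :
    IsMarginal (kroneckerOne E) M (ptrace3E M) := fun Y => by
  simp only [kroneckerOne_apply, ptrace3E, Matrix.trace, diag_apply, Matrix.mul_apply, of_apply,
    submatrix_apply, Equiv.prodAssoc_symm_apply, kroneckerMap_apply, one_apply, mul_ite, mul_one,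
    mul_zero, ite_mul, zero_mul, Fintype.sum_prod_type, Finset.sum_ite_eq, Finset.mem_univ, if_true,
    Finset.mul_sum]
  refine Finset.sum_congr rfl fun r _ => Finset.sum_congr rfl fun q _ => ?_
  rw [Finset.sum_comm]
  exact Finset.sum_congr rfl fun r' _ => Finset.sum_comm

theorem ptrace3E_oneKronecker (τ : Matrix (Q × E) (Q × E) ℂ) :
    ptrace3E (oneKronecker R τ) = oneKronecker R (ptraceRight τ) := by
  ext x y
  simp [ptrace3E, oneKronecker_apply, ptraceRight, kroneckerMap_apply, Finset.mul_sum]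

omit [DecidableEq R] [Fintype Q] [DecidableEq Q] [DecidableEq E] in
theorem ptraceRight_ptraceLeft (M : Matrix (R × Q × E) (R × Q × E) ℂ) :
    ptraceRight (ptraceLeft M) = ptraceLeft (ptrace3E M) := by
  ext x y
  exact Finset.sum_comm

omit [Fintype R] [DecidableEq R] [DecidableEq Q] [DecidableEq E] in
theorem ptraceRight_ptrace3E (M : Matrix (R × Q × E) (R × Q × E) ℂ) :
    ptraceRight (ptrace3E M) = ptraceRight M := by
  ext x y
  simp only [ptraceRight, ptrace3E, of_apply, Fintype.sum_prod_type]

theorem condMutualInfo_nonneg {ρ : Matrix (R × Q × E) (R × Q × E) ℂ} (hρ : ρ.PosSemidef) :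
    0 ≤ condMutualInfo ρ := by
  have hRQ := isMarginal_ptrace3E ρ
  have hQE := isMarginal_ptraceLeft ρ
  have hQ := isMarginal_ptraceLeft (ptrace3E ρ)
  have hτ : IsMarginal (kroneckerOne E) (oneKronecker R (ptraceLeft ρ))
      (oneKronecker R (ptraceLeft (ptrace3E ρ))) := by
    rw [← ptraceRight_ptraceLeft, ← ptrace3E_oneKronecker]
    exact isMarginal_ptrace3E _
  have hmono := hRQ.relEntropy_le hτ hρ
    (starAlgHom_posSemidef _ (hQE.posSemidef hρ)) (hQE.supportLE_map hρ)
  rw [hQE.relEntropy_map hρ.isHermitian,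
    hQ.relEntropy_map (hRQ.isHermitian hρ.isHermitian)] at hmono
  rw [condMutualInfo]
  linarith

theorem condMutualInfo_eq_sub (ρ : Matrix (R × Q × E) (R × Q × E) ℂ) :
    condMutualInfo ρ = mutualInfo ρ - mutualInfo (ptrace3E ρ) := by
  rw [condMutualInfo, mutualInfo, mutualInfo, ptraceRight_ptrace3E]
  ring

/-- The isometry that appends a one-dimensional environment. -/
def appendUnit (B : Type*) [DecidableEq B] : Matrix (B × Unit) B ℂ :=
  (1 : Matrix B B ℂ).submatrix (Equiv.prodUnique B Unit) id

theorem appendUnit_conjTranspose_mul_self : (appendUnit B)ᴴ * appendUnit B = 1 := by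
  rw [appendUnit, conjTranspose_submatrix, submatrix_mul_equiv, conjTranspose_one, Matrix.one_mul,
    submatrix_id_id]

theorem ptrace3E_appendUnit (M : Matrix (A × B) (A × B) ℂ) :
    ptrace3E (((1 : Matrix A A ℂ) ⊗ₖ appendUnit B) * M * ((1 : Matrix A A ℂ) ⊗ₖ appendUnit B)ᴴ) =
      M := by
  have hV : (1 : Matrix A A ℂ) ⊗ₖ appendUnit B =
      (1 : Matrix (A × B) (A × B) ℂ).submatrix (fun x => (x.1, x.2.1)) id := by
    ext x y
    simp [appendUnit, kroneckerMap_apply, one_apply, Prod.ext_iff, ← ite_and, and_comm]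
  ext x y
  simp [hV, ptrace3E, Matrix.mul_apply, one_apply]

end TensorFactors

theorem stmt1_general {R Q E : Type*} [Fintype R] [DecidableEq R] [Fintype Q] [DecidableEq Q]
    [Fintype E] [DecidableEq E] {ρ : Matrix (R × Q × E) (R × Q × E) ℂ} (hρ : ρ.PosSemidef)
    (hdp : mutualInfo ρ ≤ mutualInfo (ptrace3E ρ)) : condMutualInfo ρ = 0 :=
  le_antisymm (condMutualInfo_eq_sub ρ ▸ sub_nonpos.2 hdp) (condMutualInfo_nonneg hρ)

/-- If a tripartite state `ρ_RQE` satisfies the quantum data-processing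
inequality for every joint system-environment isometric evolution, then `I(R;E|Q)_ρ = 0`. -/
theorem stmt1 {R Q E : Type} [Fintype R] [DecidableEq R] [Fintype Q] [DecidableEq Q]
    [Fintype E] [DecidableEq E]
    (ρ : Matrix (R × Q × E) (R × Q × E) ℂ) (hρ : IsState ρ)
    (hdp : ∀ (Q' E' : Type) [Fintype Q'] [DecidableEq Q'] [Fintype E'] [DecidableEq E']
      (V : Matrix (Q' × E') (Q × E) ℂ), Vᴴ * V = 1 →
      mutualInfo (ptrace3E
          (((1 : Matrix R R ℂ) ⊗ₖ V) * ρ * ((1 : Matrix R R ℂ) ⊗ₖ V)ᴴ))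
        ≤ mutualInfo (ptrace3E ρ)) :
    condMutualInfo ρ = 0 :=
  stmt1_general hρ.1 <| by
    simpa only [ptrace3E_appendUnit] using
      hdp (Q × E) Unit (appendUnit (Q × E)) appendUnit_conjTranspose_mul_self
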